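/- Local monotonicity of the GOY operator: there exists a constant C > 0 (depending only on the model) such that for every ν > 0, every r > 0, every u ∈ D(A), and every v ∈ D(A) with ‖v‖_{ℓ⁴} ≤ r, writing F(x) = −νAx − B(x,x) and w = u − v, one has (F(u) − F(v), w)_H ≤ −(ν/2) ‖w‖² + (C r⁴/ν³) |w|². -/

import Mathlib

/-!
Write `w = u - v`.  Bilinearity gives `B(u,u) - B(v,v) = B(w,w) + B(v,w) + B(w,v)`.

* The cubic term vanishes: with `T n = i kₙ w̄ₙ w̄ₙ₊₁ w̄ₙ₊₂`, the `n`-th term of `(B(w,w), w)` is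
  `T (n-1) / 2 - T n + T (n-2) / 2`, and these sum to `0` (`hasSum_goyB_self`).
* The terms linear in `v` only need `sup |vₙ| ≤ ‖v‖_{ℓ⁴} ≤ r`: Young's inequality gives
  `|(B(v,w) + B(w,v), w)| ≤ (ν/4) ‖w‖² + (64 r²/ν) |w|²` (`norm_goyB_cross_le`,
  `hasSum_nbr`).
* A second Young inequality and the Poincaré inequality `4 k₀² |w|² ≤ ‖w‖²` turn the factor `r²/ν`
  into `r⁴/ν³` at the cost of another `(ν/4) ‖w‖²`.
-/

/-- The wave numbers `k n = k₀ * 2 ^ n`. -/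
noncomputable def kk (k₀ : ℝ) (n : ℕ) : ℝ := k₀ * 2 ^ n

/-- The GOY bilinear operator, componentwise.  The index `n = 0` is not used (sequences are
indexed from `1`) and the boundary conventions `u₀ = u₋₁ = v₀ = v₋₁ = 0` are realized by the
hypotheses `u 0 = 0`, `v 0 = 0` together with truncated subtraction on `ℕ`. -/
noncomputable def goyB (k₀ : ℝ) (u v : ℕ → ℂ) (n : ℕ) : ℂ :=
  if n = 0 then 0 else
    Complex.I * (kk k₀ n : ℂ) *
      ((1 / 4 : ℂ) * (starRingEnd ℂ) (u (n + 1)) * (starRingEnd ℂ) (v (n - 1))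
        - (1 / 2 : ℂ) * ((starRingEnd ℂ) (u (n + 1)) * (starRingEnd ℂ) (v (n + 2))
            + (starRingEnd ℂ) (u (n + 2)) * (starRingEnd ℂ) (v (n + 1)))
        + (1 / 8 : ℂ) * (starRingEnd ℂ) (u (n - 1)) * (starRingEnd ℂ) (v (n - 2)))

/-- The triad `i kₙ w̄ₙ w̄ₙ₊₁ w̄ₙ₊₂`, out of which the energy flux of the GOY model is built. -/
noncomputable def triad (k₀ : ℝ) (w : ℕ → ℂ) (n : ℕ) : ℂ :=
  Complex.I * (kk k₀ n : ℂ) * (starRingEnd ℂ) (w n) * (starRingEnd ℂ) (w (n + 1))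
    * (starRingEnd ℂ) (w (n + 2))

/-- The sum of `|wₘ|²` over the four indices `m ≠ n` at distance at most `2` from `n`.  Truncated
subtraction is harmless when `w 0 = 0`. -/
noncomputable def nbr (w : ℕ → ℂ) (n : ℕ) : ℝ :=
  ‖w (n - 1)‖ ^ 2 + ‖w (n - 2)‖ ^ 2 + ‖w (n + 1)‖ ^ 2 + ‖w (n + 2)‖ ^ 2

lemma hasSum_shift_right {f : ℕ → ℝ} {s : ℝ} (h0 : f 0 = 0) (hf : HasSum f s) :
    HasSum (fun n => f (n - 1)) s := by
  rw [← hasSum_nat_add_iff' 1]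
  simpa [h0] using hf

lemma hasSum_nbr {w : ℕ → ℂ} (h0 : w 0 = 0) (hw : Summable fun n => ‖w n‖ ^ 2) :
    HasSum (nbr w) (4 * (∑' n, ‖w n‖ ^ 2) - ‖w 1‖ ^ 2) := by
  have h := hw.hasSum
  have h1 := hasSum_shift_right (by simp [h0]) h
  have h2 := hasSum_shift_right (by simp [h0]) h1
  have h3 := (hasSum_nat_add_iff' 1).2 h
  have h4 := (hasSum_nat_add_iff' 2).2 h
  have h5 := ((h1.add h2).add h3).add h4
  simp only [Finset.sum_range_succ, Finset.sum_range_zero, h0, Nat.sub_sub] at h5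
  convert h5 using 1
  · rfl
  · simp only [norm_zero]
    ring

lemma summable_triad {k₀ : ℝ} (hk₀ : 0 < k₀) {w : ℕ → ℂ} (hw : Summable fun n => ‖w n‖ ^ 2)
    (hkw : Summable fun n => kk k₀ n ^ 2 * ‖w n‖ ^ 2) : Summable (triad k₀ w) := by
  have hM : ∀ n, ‖w n‖ ≤ 1 + ∑' n, ‖w n‖ ^ 2 := fun n => by
    have := hw.le_tsum n (fun _ _ => by positivity)
    nlinarith [sq_nonneg (‖w n‖ - 1), norm_nonneg (w n)]
  have hs : Summable fun n =>
      (kk k₀ n ^ 2 * ‖w n‖ ^ 2 + ‖w (n + 1)‖ ^ 2) * (1 + ∑' n, ‖w n‖ ^ 2) :=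
    (hkw.add ((summable_nat_add_iff 1).2 hw)).mul_right _
  refine Summable.of_norm_bounded hs fun n => ?_
  have hk : 0 < kk k₀ n := by unfold kk; positivity
  simp only [triad, norm_mul, Complex.norm_I, Complex.norm_real, RCLike.norm_conj,
    Real.norm_eq_abs, abs_of_pos hk, one_mul]
  refine mul_le_mul ?_ (hM _) (norm_nonneg _) (by positivity)
  nlinarith [sq_nonneg (kk k₀ n * ‖w n‖ - ‖w (n + 1)‖),
    sq_nonneg (kk k₀ n * ‖w n‖ + ‖w (n + 1)‖)]

/-- Energy conservation `(B(w,w), w) = 0`.  The coefficients `1/4`, `-1`, `1/8` are such that each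
triad enters the sum with total weight `1/2 - 1 + 1/2`. -/
lemma hasSum_goyB_self {k₀ : ℝ} {w : ℕ → ℂ} (h0 : w 0 = 0) (hT : Summable (triad k₀ w)) :
    HasSum (fun n => goyB k₀ w w n * (starRingEnd ℂ) (w n)) 0 := by
  have h := hT.hasSum
  have h1 := (hasSum_nat_add_iff' 1).2 h
  have h2 := (hasSum_nat_add_iff' 2).2 h
  have h3 := ((h1.div_const 2).sub h2).add (h.div_const 2)
  rw [← hasSum_nat_add_iff' 2]
  have hT0 : triad k₀ w 0 = 0 := by simp [triad, h0]
  convert h3 using 1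
  · funext n
    simp [goyB, triad, kk, pow_succ]
    ring
  · simp [Finset.sum_range_succ, hT0]
    simp [goyB, triad, h0]
    ring

/-- Pointwise bound of the terms linear in `v`, by Young's inequality with the wave number put on
`wₙ`. -/
lemma norm_goyB_cross_le {k₀ ν r : ℝ} (hk₀ : 0 < k₀) (hν : 0 < ν) {v w : ℕ → ℂ}
    (hv : ∀ n, ‖v n‖ ≤ r) (n : ℕ) :
    ‖(goyB k₀ v w n + goyB k₀ w v n) * (starRingEnd ℂ) (w n)‖ ≤
      ν / 4 * (kk k₀ n ^ 2 * ‖w n‖ ^ 2) + 16 * r ^ 2 / ν * nbr w n := by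
  have hr : 0 ≤ r := (norm_nonneg _).trans (hv 0)
  have hk : 0 < kk k₀ n := by unfold kk; positivity
  set a := ‖w (n - 1)‖ with ha
  set b := ‖w (n - 2)‖ with hb
  set c := ‖w (n + 1)‖ with hc
  set d := ‖w (n + 2)‖ with hd
  have ha0 : 0 ≤ a := norm_nonneg _
  have hb0 : 0 ≤ b := norm_nonneg _
  have hc0 : 0 ≤ c := norm_nonneg _
  have hd0 : 0 ≤ d := norm_nonneg _
  have key : ‖goyB k₀ v w n + goyB k₀ w v n‖ ≤ kk k₀ n * (2 * r * (a + b + c + d)) := by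
    by_cases hn : n = 0
    · simp only [goyB, hn, if_true, add_zero, norm_zero]
      unfold kk
      positivity
    have e : goyB k₀ v w n + goyB k₀ w v n = Complex.I * (kk k₀ n : ℂ) *
        (starRingEnd ℂ) ((1 / 4 : ℂ) * (v (n + 1) * w (n - 1)) + (1 / 4 : ℂ) * (v (n - 1) * w (n + 1))
          - v (n + 1) * w (n + 2) - v (n + 2) * w (n + 1)
          + (1 / 8 : ℂ) * (v (n - 1) * w (n - 2)) + (1 / 8 : ℂ) * (v (n - 2) * w (n - 1))) := by
      simp [goyB, hn, map_ofNat]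
      ring
    rw [e]
    simp only [norm_mul, Complex.norm_I, Complex.norm_real, RCLike.norm_conj,
      Real.norm_eq_abs, abs_of_pos hk, one_mul]
    refine mul_le_mul_of_nonneg_left ?_ hk.le
    have hm : ∀ i j, ‖v i * w j‖ ≤ r * ‖w j‖ := fun i j => by
      rw [norm_mul]
      exact mul_le_mul_of_nonneg_right (hv i) (norm_nonneg _)
    have n4 : ‖(1 / 4 : ℂ)‖ = 1 / 4 := by norm_num
    have n8 : ‖(1 / 8 : ℂ)‖ = 1 / 8 := by norm_num
    refine (norm_add_le _ _).trans ?_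
    refine (add_le_add_left (norm_add_le _ _) _).trans ?_
    refine (add_le_add_left (add_le_add_left (norm_sub_le _ _) _) _).trans ?_
    refine (add_le_add_left (add_le_add_left (add_le_add_left (norm_sub_le _ _) _) _) _).trans ?_
    refine (add_le_add_left (add_le_add_left (add_le_add_left
      (add_le_add_left (norm_add_le _ _) _) _) _) _).trans ?_
    rw [norm_mul (1 / 4 : ℂ), norm_mul (1 / 4 : ℂ), norm_mul (1 / 8 : ℂ), norm_mul (1 / 8 : ℂ),
      n4, n8]
    have := hm (n + 1) (n - 1)
    have := hm (n - 1) (n + 1)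
    have := hm (n + 1) (n + 2)
    have := hm (n + 2) (n + 1)
    have := hm (n - 1) (n - 2)
    have := hm (n - 2) (n - 1)
    have := mul_nonneg hr ha0
    have := mul_nonneg hr hb0
    have := mul_nonneg hr hc0
    have := mul_nonneg hr hd0
    linarith
  rw [norm_mul, RCLike.norm_conj]
  refine (mul_le_mul_of_nonneg_right key (norm_nonneg _)).trans ?_
  have hyoung : ∀ p q : ℝ, p * q ≤ ν / 4 * p ^ 2 + q ^ 2 / ν := fun p q => by
    have : ν / 4 * p ^ 2 + q ^ 2 / ν - p * q = (ν * p / 2 - q) ^ 2 / ν := by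
      field_simp
      ring
    have : 0 ≤ (ν * p / 2 - q) ^ 2 / ν := by positivity
    linarith
  have hs : (a + b + c + d) ^ 2 ≤ 4 * nbr w n := by
    simp only [nbr, ← ha, ← hb, ← hc, ← hd]
    nlinarith [sq_nonneg (a - b), sq_nonneg (a - c), sq_nonneg (a - d), sq_nonneg (b - c),
      sq_nonneg (b - d), sq_nonneg (c - d)]
  have h1 := hyoung (kk k₀ n * ‖w n‖) (2 * r * (a + b + c + d))
  have h2 : (2 * r * (a + b + c + d)) ^ 2 / ν ≤ 16 * r ^ 2 / ν * nbr w n := by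
    have : 16 * r ^ 2 / ν * nbr w n = 4 * r ^ 2 / ν * (4 * nbr w n) := by ring
    rw [this, show (2 * r * (a + b + c + d)) ^ 2 / ν
      = 4 * r ^ 2 / ν * (a + b + c + d) ^ 2 by ring]
    gcongr
  nlinarith

lemma norm_le_of_l4_le {v : ℕ → ℂ} {r : ℝ} (hv : Summable fun n => ‖v n‖ ^ 2)
    (h : (∑' n, ‖v n‖ ^ 4) ^ ((1 : ℝ) / 4) ≤ r) (n : ℕ) : ‖v n‖ ≤ r := by
  have hs : Summable fun n => ‖v n‖ ^ 4 := by
    refine Summable.of_nonneg_of_le (fun _ => by positivity) (fun m => ?_)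
      (hv.mul_right (∑' n, ‖v n‖ ^ 2))
    have := hv.le_tsum m (fun _ _ => by positivity)
    calc ‖v m‖ ^ 4 = ‖v m‖ ^ 2 * ‖v m‖ ^ 2 := by ring
      _ ≤ _ := by gcongr
  have h1 := hs.le_tsum n (fun _ _ => by positivity)
  calc ‖v n‖ = (‖v n‖ ^ 4) ^ ((1 : ℝ) / 4) := by
        rw [← Real.rpow_natCast, ← Real.rpow_mul (norm_nonneg _)]
        norm_num
    _ ≤ (∑' n, ‖v n‖ ^ 4) ^ ((1 : ℝ) / 4) := by gcongr
    _ ≤ r := h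

lemma summable_sub_sq {a : ℕ → ℝ} (ha : ∀ n, 0 ≤ a n) {u v : ℕ → ℂ}
    (hu : Summable fun n => a n * ‖u n‖ ^ 2) (hv : Summable fun n => a n * ‖v n‖ ^ 2) :
    Summable fun n => a n * ‖u n - v n‖ ^ 2 := by
  refine Summable.of_nonneg_of_le (fun n => mul_nonneg (ha n) (by positivity)) (fun n => ?_)
    ((hu.add hv).mul_left 2)
  have h : ‖u n - v n‖ ^ 2 ≤ 2 * (‖u n‖ ^ 2 + ‖v n‖ ^ 2) := by
    have h1 := norm_sub_le (u n) (v n)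
    nlinarith [sq_nonneg (‖u n‖ - ‖v n‖), norm_nonneg (u n - v n)]
  nlinarith [mul_le_mul_of_nonneg_left h (ha n)]

/-- Local monotonicity of the GOY operator `F(x) = -ν A x - B(x,x)`:
there exists `C > 0` (depending only on the model) such that for every `ν > 0`, `r > 0`,
every `u ∈ D(A)` and every `v ∈ D(A)` with `‖v‖_{ℓ⁴} ≤ r`, writing `w = u - v`,
`(F(u) - F(v), w)_H ≤ -(ν/2) ‖w‖² + (C r⁴ / ν³) |w|²`. -/
theorem goy_local_monotonicity (k₀ : ℝ) (hk₀ : 0 < k₀) :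
    ∃ C > 0, ∀ ν : ℝ, 0 < ν → ∀ r : ℝ, 0 < r → ∀ u v : ℕ → ℂ,
      u 0 = 0 → v 0 = 0 →
      Summable (fun n => ‖u n‖ ^ 2) →
      Summable (fun n => (kk k₀ n) ^ 4 * ‖u n‖ ^ 2) →
      Summable (fun n => ‖v n‖ ^ 2) →
      Summable (fun n => (kk k₀ n) ^ 4 * ‖v n‖ ^ 2) →
      (∑' n, ‖v n‖ ^ 4) ^ ((1 : ℝ) / 4) ≤ r →
      (∑' n, ((-(ν : ℂ) * ((kk k₀ n : ℂ)) ^ 2 * u n - goyB k₀ u u n)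
            - (-(ν : ℂ) * ((kk k₀ n : ℂ)) ^ 2 * v n - goyB k₀ v v n))
          * (starRingEnd ℂ) (u n - v n)).re ≤
        -(ν / 2) * (∑' n, (kk k₀ n) ^ 2 * ‖u n - v n‖ ^ 2)
          + (C * r ^ 4 / ν ^ 3) * (∑' n, ‖u n - v n‖ ^ 2) := by
  refine ⟨1024 / k₀ ^ 2, by positivity, ?_⟩
  intro ν hν r hr u v hu0 hv0 hu hAu hv hAv hr4
  have hvr := norm_le_of_l4_le hv hr4
  set w : ℕ → ℂ := fun n => u n - v n with hw
  have hw0 : w 0 = 0 := by simp [hw, hu0, hv0]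
  have hw2 : Summable fun n => ‖w n‖ ^ 2 := by
    simpa using summable_sub_sq (a := fun _ => 1) (fun _ => zero_le_one) (by simpa using hu)
      (by simpa using hv)
  have hw4 : Summable fun n => kk k₀ n ^ 4 * ‖w n‖ ^ 2 :=
    summable_sub_sq (fun n => by positivity) hAu hAv
  -- `D(A) ⊆ V`, since `k² ≤ 1 + k⁴`
  have hkw : Summable fun n => kk k₀ n ^ 2 * ‖w n‖ ^ 2 := by
    refine Summable.of_nonneg_of_le (fun n => by positivity) (fun n => ?_) (hw2.add hw4)
    have : kk k₀ n ^ 2 ≤ 1 + kk k₀ n ^ 4 := by nlinarith [sq_nonneg (kk k₀ n ^ 2 - 1)]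
    nlinarith [mul_le_mul_of_nonneg_right this (sq_nonneg ‖w n‖)]
  have hE := hasSum_goyB_self hw0 (summable_triad hk₀ hw2 hkw)
  have hbd := (hkw.hasSum.mul_left (ν / 4)).add ((hasSum_nbr hw0 hw2).mul_left (16 * r ^ 2 / ν))
  have hRle := tsum_of_norm_bounded hbd (norm_goyB_cross_le hk₀ hν hvr)
  have hR : Summable fun n => (goyB k₀ v w n + goyB k₀ w v n) * (starRingEnd ℂ) (w n) :=
    Summable.of_norm_bounded hbd.summable (norm_goyB_cross_le hk₀ hν hvr)
  have hX := (Complex.hasSum_ofReal.2 hkw.hasSum).mul_left (-(ν : ℂ))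
  have hsum := (hX.sub hE).sub hR.hasSum
  have heq : (fun n => ((-(ν : ℂ) * ((kk k₀ n : ℂ)) ^ 2 * u n - goyB k₀ u u n)
      - (-(ν : ℂ) * ((kk k₀ n : ℂ)) ^ 2 * v n - goyB k₀ v v n)) * (starRingEnd ℂ) (u n - v n))
      = fun n => -(ν : ℂ) * ((kk k₀ n ^ 2 * ‖w n‖ ^ 2 : ℝ) : ℂ)
        - goyB k₀ w w n * (starRingEnd ℂ) (w n)
        - (goyB k₀ v w n + goyB k₀ w v n) * (starRingEnd ℂ) (w n) := by
    funext n
    have hB : goyB k₀ u u n - goyB k₀ v v n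
        = goyB k₀ w w n + (goyB k₀ v w n + goyB k₀ w v n) := by
      by_cases hn : n = 0
      · simp [goyB, hn]
      · simp only [goyB, hn, if_false, hw, map_sub]
        ring
    have hsq : ((kk k₀ n ^ 2 * ‖w n‖ ^ 2 : ℝ) : ℂ)
        = (kk k₀ n : ℂ) ^ 2 * (w n * (starRingEnd ℂ) (w n)) := by
      rw [Complex.mul_conj, Complex.normSq_eq_norm_sq]
      push_cast
      ring
    rw [hsq]
    change _ * (starRingEnd ℂ) (w n) = _
    have hwn : w n = u n - v n := rfl
    linear_combination (-(starRingEnd ℂ) (w n)) * hB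
      + (ν : ℂ) * (kk k₀ n : ℂ) ^ 2 * (starRingEnd ℂ) (w n) * hwn
  rw [heq, hsum.tsum_eq]
  change _ ≤ -(ν / 2) * (∑' n, kk k₀ n ^ 2 * ‖w n‖ ^ 2)
    + (1024 / k₀ ^ 2 * r ^ 4 / ν ^ 3) * (∑' n, ‖w n‖ ^ 2)
  have hpoinc : 4 * k₀ ^ 2 * (∑' n, ‖w n‖ ^ 2) ≤ ∑' n, kk k₀ n ^ 2 * ‖w n‖ ^ 2 := by
    rw [← tsum_mul_left]
    refine (hw2.mul_left _).tsum_le_tsum (fun n => ?_) hkw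
    rcases n with _ | n
    · simp [hw0]
    · have h1 : (1 : ℝ) ≤ 2 ^ n := one_le_pow₀ (by norm_num)
      refine mul_le_mul_of_nonneg_right ?_ (by positivity)
      have h2 : kk k₀ (n + 1) ^ 2 = 4 * k₀ ^ 2 * (2 ^ n) ^ 2 := by
        unfold kk
        ring
      rw [h2]
      exact le_mul_of_one_le_right (by positivity) (one_le_pow₀ h1)
  have hY0 : 0 ≤ ∑' n, ‖w n‖ ^ 2 := tsum_nonneg fun n => by positivity
  generalize (∑' n, ‖w n‖ ^ 2) = Y at *
  generalize (∑' n, kk k₀ n ^ 2 * ‖w n‖ ^ 2) = X at *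
  generalize (∑' n, (goyB k₀ v w n + goyB k₀ w v n) * (starRingEnd ℂ) (w n)) = R at *
  have hre : (-(ν : ℂ) * (X : ℂ) - 0 - R).re = -ν * X - R.re := by simp
  rw [hre]
  have h1 := (abs_le.1 ((Complex.abs_re_le_norm R).trans hRle)).1
  have h2 : 0 ≤ 16 * r ^ 2 / ν * ‖w 1‖ ^ 2 := by positivity
  -- Young: `64 r² / ν ≤ ν k₀² + 1024 r⁴ / (k₀² ν³)`
  have h3 : 64 * r ^ 2 / ν ≤ ν * k₀ ^ 2 + 1024 / k₀ ^ 2 * r ^ 4 / ν ^ 3 := by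
    have : ν * k₀ ^ 2 + 1024 / k₀ ^ 2 * r ^ 4 / ν ^ 3 - 64 * r ^ 2 / ν
        = (ν ^ 2 * k₀ ^ 2 - 32 * r ^ 2) ^ 2 / (k₀ ^ 2 * ν ^ 3) := by
      field_simp
      ring
    have : 0 ≤ (ν ^ 2 * k₀ ^ 2 - 32 * r ^ 2) ^ 2 / (k₀ ^ 2 * ν ^ 3) := by positivity
    linarith
  have h4 := mul_le_mul_of_nonneg_right h3 hY0
  have h5 := mul_le_mul_of_nonneg_left hpoinc hν.le
  have h6 : 16 * r ^ 2 / ν * (4 * Y - ‖w 1‖ ^ 2)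
      = 64 * r ^ 2 / ν * Y - 16 * r ^ 2 / ν * ‖w 1‖ ^ 2 := by ring
  linarith
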